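/- Let d ≥ 1 and N ≥ 2 be integers, let η be a distortion function and let 0 < α < d. Then there exists m_0 ∈ ℕ such that for every m ≥ m_0, every (N,m)-fat Cantor set F ⊆ [0,1]^d, every metric space Y and every η-quasisymmetry f : F → Y, one has dim_H f(F) ≥ α. -/

import Mathlib

open Set Metric MeasureTheory ProbabilityTheory Filter
open scoped ENNReal NNReal Classical

noncomputable section

/-- A distortion function: a homeomorphism of `[0,∞)` onto itself
(equivalently, a continuous strictly increasing surjection of `[0,∞)` with `η 0 = 0`). -/
def IsDistortion (η : ℝ → ℝ) : Prop :=
  ContinuousOn η (Set.Ici 0) ∧ StrictMonoOn η (Set.Ici 0) ∧ η 0 = 0 ∧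
    Set.SurjOn η (Set.Ici 0) (Set.Ici 0)

/-- `f` is an `η`-quasisymmetry on the set `E`:
it is injective on `E` and satisfies the quasisymmetry inequality on points of `E`. -/
def IsQSOn {X Y : Type*} [MetricSpace X] [MetricSpace Y] (η : ℝ → ℝ) (f : X → Y)
    (E : Set X) : Prop :=
  Set.InjOn f E ∧ ∀ x ∈ E, ∀ y ∈ E, ∀ z ∈ E, x ≠ z →
    dist (f x) (f y) ≤ η (dist x y / dist x z) * dist (f x) (f z)

/-- `f` is a `β`-power quasisymmetry on `E`: an `η`-quasisymmetry with
`η t = C * max (t ^ β) (t ^ (1 / β))` for some `C > 0`. -/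
def IsPowerQSOn {X Y : Type*} [MetricSpace X] [MetricSpace Y] (β : ℝ) (f : X → Y)
    (E : Set X) : Prop :=
  ∃ C : ℝ, 0 < C ∧ IsQSOn (fun t => C * max (t ^ β) (t ^ (1 / β))) f E

/-- Distance between two sets: `inf {dist a b : a ∈ A, b ∈ B}`. -/
def setDist {X : Type*} [MetricSpace X] (A B : Set X) : ℝ :=
  sInf (Set.image2 dist A B)

/-- The closed axis-parallel cube with lower corner `c` and side length `l`. -/
def cube {d : ℕ} (c : Fin d → ℝ) (l : ℝ) : Set (EuclideanSpace ℝ (Fin d)) :=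
  {x | ∀ i, c i ≤ x i ∧ x i ≤ c i + l}

/-- Lower corner of the subcube with address `a` when the cube with lower corner `c` and
side `l` is divided into `K ^ d` congruent subcubes. -/
def childCorner {d : ℕ} (c : Fin d → ℝ) (l : ℝ) (K : ℕ) (a : Fin d → Fin K) : Fin d → ℝ :=
  fun i => c i + l / K * (a i : ℝ)

/-- Side length `N ^ (-m*n)` of level-`n` cubes in the `(N,m)`-fat Cantor construction. -/
def fatSide (N m n : ℕ) : ℝ := ((N : ℝ) ^ (m * n))⁻¹

/-- `𝓕` is the sequence of families of cubes of an `(N,m)`-fat Cantor construction in `[0,1]^d`: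
`𝓕 0 = {[0,1]^d}`, and each cube `Q ∈ 𝓕 n` is divided into `N^(m*d)` congruent subcubes of which
exactly one is removed, `𝓕 (n+1)` consisting of all retained subcubes. -/
def IsFatCantorFamilies (d N m : ℕ) (𝓕 : ℕ → Set (Set (EuclideanSpace ℝ (Fin d)))) : Prop :=
  𝓕 0 = {cube (fun _ => 0) 1} ∧
  (∀ n, ∀ Q ∈ 𝓕 n, ∃ c : Fin d → ℝ, Q = cube c (fatSide N m n) ∧
    ∃ a₀ : Fin d → Fin (N ^ m),
      {Q' ∈ 𝓕 (n + 1) | Q' ⊆ Q} =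
        {Q' | ∃ a : Fin d → Fin (N ^ m), a ≠ a₀ ∧
          Q' = cube (childCorner c (fatSide N m n) (N ^ m) a) (fatSide N m (n + 1))}) ∧
  (∀ n, ∀ Q' ∈ 𝓕 (n + 1), ∃ Q ∈ 𝓕 n, Q' ⊆ Q)

/-- `F` is an `(N,m)`-fat Cantor set in `[0,1]^d`. -/
def IsFatCantorSet (d N m : ℕ) (F : Set (EuclideanSpace ℝ (Fin d))) : Prop :=
  ∃ 𝓕, IsFatCantorFamilies d N m 𝓕 ∧ F = ⋂ n, ⋃₀ 𝓕 n

/-- Side length `∏_{m=1}^n (N m)⁻¹` of level-`n` cubes of a dense-Cantor construction with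
subdivision sequence `N`. -/
def denseSide (N : ℕ → ℕ) (n : ℕ) : ℝ := ∏ m ∈ Finset.Icc 1 n, ((N m : ℝ))⁻¹

/-- `𝓔` is the sequence of families of cubes of a dense-Cantor construction in `[0,1]^d`
with subdivision sequence `N`: `𝓔 0 = {[0,1]^d}`, every cube of `𝓔 (n+1)` is one of the
`(N (n+1))^d` congruent subcubes of a cube of `𝓔 n`, and every cube of `𝓔 n` has at least one
retained subcube in `𝓔 (n+1)`. -/
def IsDenseCantorFamilies (d : ℕ) (N : ℕ → ℕ)
    (𝓔 : ℕ → Set (Set (EuclideanSpace ℝ (Fin d)))) : Prop :=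
  𝓔 0 = {cube (fun _ => 0) 1} ∧
  (∀ n, ∀ Q' ∈ 𝓔 (n + 1), ∃ Q ∈ 𝓔 n, Q' ⊆ Q ∧ ∃ c : Fin d → ℝ, Q = cube c (denseSide N n) ∧
      ∃ a : Fin d → Fin (N (n + 1)),
        Q' = cube (childCorner c (denseSide N n) (N (n + 1)) a) (denseSide N (n + 1))) ∧
  (∀ n, ∀ Q ∈ 𝓔 n, ∃ Q' ∈ 𝓔 (n + 1), Q' ⊆ Q)

/-- A (possibly degenerate) line segment parallel to the `d`-th coordinate direction
(the kernel of the projection to the first `d-1` coordinates). -/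
def IsVerticalSeg {d : ℕ} (A : Set (EuclideanSpace ℝ (Fin d))) : Prop :=
  ∃ x y : EuclideanSpace ℝ (Fin d), A = segment ℝ x y ∧
    ∀ i : Fin d, (i : ℕ) < d - 1 → x i = y i

/-- The dense-Cantor construction `𝓔` is `(Δ_n)_n`-dense: for all sufficiently large `n` and
every `Q ∈ 𝓔 n`, every vertical line segment contained in `Q \ ⋃ 𝓔 (n+1)` has diameter at most
`Δ (n+1) * diam Q`. -/
def IsDeltaDense {d : ℕ} (Δ : ℕ → ℝ) (𝓔 : ℕ → Set (Set (EuclideanSpace ℝ (Fin d)))) : Prop :=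
  ∃ n₀ : ℕ, ∀ n, n₀ ≤ n → ∀ Q ∈ 𝓔 n, ∀ A : Set (EuclideanSpace ℝ (Fin d)),
    IsVerticalSeg A → A ⊆ Q \ ⋃₀ 𝓔 (n + 1) →
      Metric.diam A ≤ Δ (n + 1) * Metric.diam Q

/-- The dyadic cube of level `k` in `[0,1]^d` with address `a`. -/
def dyCube (d k : ℕ) (a : Fin d → Fin (2 ^ k)) : Set (EuclideanSpace ℝ (Fin d)) :=
  cube (fun i => (a i : ℝ) / 2 ^ k) (((2 : ℝ) ^ k)⁻¹)

/-- Lower corner of the level-`n` `N`-adic cube of `[0,1]^d` with address word `w`. -/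
def fatCorner (d N : ℕ) {n : ℕ} (w : Fin n → Fin d → Fin N) : Fin d → ℝ :=
  fun i => ∑ j : Fin n, ((N : ℝ) ^ (j.val + 1))⁻¹ * (w j i : ℝ)

/-- In fractal percolation with retention coins `X`, the cube with address word `w` survives if
all of its ancestors (including itself) are retained. -/
def FatSurvives {Ω : Type*} {d N : ℕ} (X : ∀ n : ℕ, (Fin n → Fin d → Fin N) → Ω → Bool)
    (ω : Ω) {n : ℕ} (w : Fin n → Fin d → Fin N) : Prop :=
  ∀ m : ℕ, ∀ h : m ≤ n, 1 ≤ m → X m (fun j => w (Fin.castLE h j)) ω = true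

/-- The fractal percolation limit set determined by the retention coins `X` at sample `ω`:
the intersection over `n` of the unions of surviving level-`n` `N`-adic cubes. -/
def fatPerc {Ω : Type*} (d N : ℕ) (X : ∀ n : ℕ, (Fin n → Fin d → Fin N) → Ω → Bool)
    (ω : Ω) : Set (EuclideanSpace ℝ (Fin d)) :=
  ⋂ n : ℕ, ⋃ w : Fin n → Fin d → Fin N, ⋃ (_ : FatSurvives X ω w),
    cube (fatCorner d N w) (((N : ℝ) ^ n)⁻¹)

/-- Lower corner of the level-`n` cube with address word `w` in the subdivision scheme where the
level-`j` cubes have side `denseSide N j`. -/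
def denseCorner (d : ℕ) (N : ℕ → ℕ) {n : ℕ}
    (w : (j : Fin n) → Fin d → Fin (N (j.val + 1))) : Fin d → ℝ :=
  fun i => ∑ j : Fin n, denseSide N (j.val + 1) * (w j i : ℝ)

/-- Survival of the cube with address word `w` in dense fractal percolation with coins `X`. -/
def DenseSurvives {Ω : Type*} {d : ℕ} {N : ℕ → ℕ}
    (X : ∀ n : ℕ, ((j : Fin n) → Fin d → Fin (N (j.val + 1))) → Ω → Bool) (ω : Ω) {n : ℕ}
    (w : (j : Fin n) → Fin d → Fin (N (j.val + 1))) : Prop :=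
  ∀ m : ℕ, ∀ h : m ≤ n, 1 ≤ m → X m (fun j => w (Fin.castLE h j)) ω = true

/-- The dense fractal percolation limit set determined by the retention coins `X` at `ω`. -/
def densePerc {Ω : Type*} (d : ℕ) (N : ℕ → ℕ)
    (X : ∀ n : ℕ, ((j : Fin n) → Fin d → Fin (N (j.val + 1))) → Ω → Bool) (ω : Ω) :
    Set (EuclideanSpace ℝ (Fin d)) :=
  ⋂ n : ℕ, ⋃ w : (j : Fin n) → Fin d → Fin (N (j.val + 1)), ⋃ (_ : DenseSurvives X ω w),
    cube (denseCorner d N w) (denseSide N n)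

/-- The function `g_N (s) = 1 - (1-s)^N - N s (1-s)^(N-1) + N^(-5)`. -/
def gFun (N : ℕ) (s : ℝ) : ℝ :=
  1 - (1 - s) ^ N - N * s * (1 - s) ^ (N - 1) + ((N : ℝ) ^ 5)⁻¹

end

/-! Write `θ = η (6 * d / K)` with `K = N ^ m`, which tends to `0` as `K` grows. Let `Q` be a cube
of the construction, `W` the diameter of `f '' (F ∩ Q)`, and `w a ≤ θ * W` the diameters of the
images of its `K ^ d` subcubes. Every line of subcubes crosses `Q`, and the removed one can be
bypassed through a neighbour, so quasisymmetry gives `W ≤ L * ∑ w` along the line with `L`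
depending only on `η` and `d`. Averaging over all parallel lines and applying Hölder's inequality
gives `W ^ d ≤ 2 * L ^ d * ∑ w a ^ d`, hence `W ^ α ≤ 2 * L ^ d * θ ^ (d - α) * ∑ w a ^ α` for
`α < d`. Once `K` is so large that the factor is at most `2 ^ (-d)`, one of the `2 ^ d` parity
classes of addresses alone satisfies `W ^ α ≤ ∑ w a ^ α`, and the images of its subcubes are
pairwise a fixed multiple of `W` apart. A family of compact sets in which every member splits in
this way has positive `α`-dimensional Hausdorff measure. -/

section Splittings

variable {Y : Type*}

/-- The cost of `A` with respect to sets `U n` priced at `v n`: the total price of those `U n` that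
meet `A`. -/
noncomputable def coverCost {ι : Type*} (U : ι → Set Y) (v : ι → ℝ≥0∞) (A : Set Y) : ℝ≥0∞ :=
  ∑' n : {n | (U n ∩ A).Nonempty}, v n

theorem le_coverCost {ι : Type*} {U : ι → Set Y} {v : ι → ℝ≥0∞} {A : Set Y} {n : ι}
    (hn : (U n ∩ A).Nonempty) : v n ≤ coverCost U v A :=
  ENNReal.le_tsum (f := fun k : {n | (U n ∩ A).Nonempty} => v k) ⟨n, hn⟩

theorem coverCost_le_tsum {ι : Type*} (U : ι → Set Y) (v : ι → ℝ≥0∞) (A : Set Y) :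
    coverCost U v A ≤ ∑' n, v n :=
  ENNReal.tsum_comp_le_tsum_of_injective Subtype.val_injective v

theorem sum_coverCost_le {ι : Type*} {U : ι → Set Y} {v : ι → ℝ≥0∞} {A : Set Y}
    {𝓑 : Finset (Set Y)} (hsub : ∀ B ∈ 𝓑, B ⊆ A)
    (hdisj : (𝓑 : Set (Set Y)).Pairwise
      (Function.onFun Disjoint fun B => {n | (U n ∩ B).Nonempty})) :
    ∑ B ∈ 𝓑, coverCost U v B ≤ coverCost U v A := by
  simp only [coverCost]
  rw [← Summable.tsum_finset_bUnion_disjoint hdisj fun _ _ => ENNReal.summable]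
  exact ENNReal.tsum_mono_subtype v <| iUnion₂_subset fun B hB n hn =>
    hn.mono (inter_subset_inter_right _ (hsub B hB))

variable [MetricSpace Y]

/-- A splitting of `A` with exponent `α` and separation `c`: finitely many subsets of at most half
the diameter of `A`, any two of them `c * diam A` apart, whose diameters to the power `α` add up to
at least `diam A ^ α`. It is the one-step hypothesis of the mass distribution principle below. -/
structure IsSplitting (α c : ℝ) (A : Set Y) (𝓑 : Finset (Set Y)) : Prop where
  subset : ∀ B ∈ 𝓑, B ⊆ A
  diam_le : ∀ B ∈ 𝓑, diam B ≤ diam A / 2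
  separated : (𝓑 : Set (Set Y)).Pairwise fun B B' => ∀ y ∈ B, ∀ z ∈ B', c * diam A ≤ dist y z
  rpow_diam_le : diam A ^ α ≤ ∑ B ∈ 𝓑, diam B ^ α

-- A set `U n` cheaper than `(c * diam A) ^ α` is too small to meet two members of the splitting, so
-- the costs of the members add up to at most the cost of `A`.
theorem IsSplitting.exists_coverCost_lt {ι : Type*} {U : ι → Set Y} {v : ι → ℝ≥0∞} {α c : ℝ}
    {A : Set Y} {𝓑 : Finset (Set Y)} (h : IsSplitting α c A 𝓑) (hα : 0 ≤ α) (hc : 0 ≤ c)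
    (hv : ∀ n, ediam (U n) ^ α ≤ v n)
    (hA : coverCost U v A < ENNReal.ofReal ((c * diam A) ^ α)) :
    ∃ B ∈ 𝓑, coverCost U v B < ENNReal.ofReal ((c * diam B) ^ α) := by
  have hdisj : (𝓑 : Set (Set Y)).Pairwise
      (Function.onFun Disjoint fun B => {n | (U n ∩ B).Nonempty}) := by
    refine fun B hB B' hB' hne => Set.disjoint_left.2 ?_
    rintro n ⟨y, hyU, hyB⟩ ⟨z, hzU, hzB'⟩
    refine hA.not_ge ?_
    calc ENNReal.ofReal ((c * diam A) ^ α) = ENNReal.ofReal (c * diam A) ^ α :=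
          (ENNReal.ofReal_rpow_of_nonneg (mul_nonneg hc diam_nonneg) hα).symm
      _ ≤ ENNReal.ofReal (dist y z) ^ α := by
          gcongr; exact h.separated hB hB' hne y hyB z hzB'
      _ ≤ ediam (U n) ^ α := by
          rw [← edist_dist]; gcongr; exact edist_le_ediam_of_mem hyU hzU
      _ ≤ v n := hv n
      _ ≤ coverCost U v A := le_coverCost ⟨y, hyU, h.subset B hB hyB⟩
  by_contra! hB
  refine hA.not_ge ?_
  calc ENNReal.ofReal ((c * diam A) ^ α) ≤ ENNReal.ofReal (∑ B ∈ 𝓑, (c * diam B) ^ α) := by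
        simp only [Real.mul_rpow hc diam_nonneg, ← Finset.mul_sum]
        gcongr
        exact h.rpow_diam_le
    _ = ∑ B ∈ 𝓑, ENNReal.ofReal ((c * diam B) ^ α) :=
        ENNReal.ofReal_sum_of_nonneg fun B _ => Real.rpow_nonneg (mul_nonneg hc diam_nonneg) _
    _ ≤ ∑ B ∈ 𝓑, coverCost U v B := Finset.sum_le_sum hB
    _ ≤ coverCost U v A := sum_coverCost_le h.subset hdisj

theorem exists_mem_forall_exists_mem_diam_lt {𝓐 : Set (Set Y)} (hcpt : ∀ A ∈ 𝓐, IsCompact A)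
    (hne : ∀ A ∈ 𝓐, A.Nonempty) (hhalf : ∀ A ∈ 𝓐, ∃ B ∈ 𝓐, B ⊆ A ∧ diam B ≤ diam A / 2)
    {A : Set Y} (hA : A ∈ 𝓐) : ∃ y ∈ A, ∀ ε > 0, ∃ B ∈ 𝓐, y ∈ B ∧ diam B < ε := by
  choose! next hnext hsub hdiam using hhalf
  set B : ℕ → Set Y := fun k => next^[k] A with hBdef
  have hBsucc (k : ℕ) : B (k + 1) = next (B k) := Function.iterate_succ_apply' ..
  have hB (k : ℕ) : B k ∈ 𝓐 := by
    induction k with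
    | zero => exact hA
    | succ k ih => exact hBsucc k ▸ hnext _ ih
  obtain ⟨y, hy⟩ : (⋂ k, B k).Nonempty :=
    IsCompact.nonempty_iInter_of_sequence_nonempty_isCompact_isClosed B
      (fun k => hBsucc k ▸ hsub _ (hB k)) (fun k => hne _ (hB k)) (hcpt _ (hB 0))
      (fun k => (hcpt _ (hB k)).isClosed)
  rw [mem_iInter] at hy
  have hdiam_le (k : ℕ) : diam (B k) ≤ diam A * (1 / 2) ^ k := by
    induction k with
    | zero => simp [hBdef]
    | succ k ih => rw [hBsucc, pow_succ]; linarith [hdiam _ (hB k)]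
  have hlim : Tendsto (fun k : ℕ => diam A * (1 / 2 : ℝ) ^ k) atTop (nhds 0) := by
    simpa using (tendsto_pow_atTop_nhds_zero_of_lt_one (by norm_num)
      (by norm_num : (1 / 2 : ℝ) < 1)).const_mul (diam A)
  refine ⟨y, hy 0, fun ε hε => ?_⟩
  obtain ⟨k, hk⟩ := (hlim.eventually_lt_const hε).exists
  exact ⟨B k, hB k, hy k, (hdiam_le k).trans_lt hk⟩

theorem exists_mem_forall_notMem_of_coverCost_lt {ι : Type*} {U : ι → Set Y} {v : ι → ℝ≥0∞}
    {𝓐 : Set (Set Y)} {α c : ℝ} (hα : 0 < α) (hc : 0 ≤ c) (hcpt : ∀ A ∈ 𝓐, IsCompact A)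
    (hne : ∀ A ∈ 𝓐, A.Nonempty)
    (hsplit : ∀ A ∈ 𝓐, ∃ 𝓑 : Finset (Set Y), ↑𝓑 ⊆ 𝓐 ∧ IsSplitting α c A 𝓑)
    (hv0 : ∀ n, v n ≠ 0) (hv : ∀ n, ediam (U n) ^ α ≤ v n) {A : Set Y} (hA : A ∈ 𝓐)
    (hcost : coverCost U v A < ENNReal.ofReal ((c * diam A) ^ α)) :
    ∃ y ∈ A, ∀ n, y ∉ U n := by
  obtain ⟨y, hyA, hy⟩ := exists_mem_forall_exists_mem_diam_lt
    (𝓐 := {B ∈ 𝓐 | coverCost U v B < ENNReal.ofReal ((c * diam B) ^ α)})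
    (fun B hB => hcpt B hB.1) (fun B hB => hne B hB.1) (fun B ⟨hB, hlt⟩ => by
      obtain ⟨𝓑, h𝓑, h⟩ := hsplit B hB
      obtain ⟨B', hB', hlt'⟩ := h.exists_coverCost_lt hα.le hc hv hlt
      exact ⟨B', ⟨h𝓑 hB', hlt'⟩, h.subset B' hB', h.diam_le B' hB'⟩)
    ⟨hA, hcost⟩
  refine ⟨y, hyA, fun n hn => ?_⟩
  have hlim : Tendsto (fun ε : ℝ => ENNReal.ofReal ((c * ε) ^ α)) (nhds 0) (nhds 0) := by
    have hcont : Continuous fun ε : ℝ => ENNReal.ofReal ((c * ε) ^ α) :=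
      ENNReal.continuous_ofReal.comp
        ((continuous_const.mul continuous_id).rpow_const fun _ => Or.inr hα.le)
    simpa [Real.zero_rpow hα.ne'] using hcont.tendsto 0
  obtain ⟨ε, hε, hball⟩ := Metric.eventually_nhds_iff.1 (hlim.eventually_lt_const (hv0 n).bot_lt)
  obtain ⟨B, ⟨-, hlt⟩, hyB, hdiam⟩ := hy ε hε
  have hsmall := hball (y := diam B) (by simpa [abs_of_nonneg diam_nonneg] using hdiam)
  exact ((le_coverCost ⟨y, hn, hyB⟩).trans hlt.le).not_gt hsmall

theorem exists_cover_tsum_lt_of_hausdorffMeasure_eq_zero [MeasurableSpace Y] [BorelSpace Y]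
    {α : ℝ} (hα : 0 < α) {s : Set Y} (hs : Measure.hausdorffMeasure α s = 0) {δ : ℝ≥0∞}
    (hδ : δ ≠ 0) :
    ∃ (U : ℕ → Set Y) (v : ℕ → ℝ≥0∞), s ⊆ ⋃ n, U n ∧ (∀ n, v n ≠ 0) ∧
      (∀ n, ediam (U n) ^ α ≤ v n) ∧ ∑' n, v n < δ := by
  have hδ2 : δ / 2 ≠ 0 := (ENNReal.half_pos hδ).ne'
  have hinf := le_of_eq hs
  rw [Measure.hausdorffMeasure_apply] at hinf
  simp only [iSup_le_iff] at hinf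
  have hlt := (hinf 1 one_pos).trans_lt hδ2.bot_lt
  simp only [iInf_lt_iff] at hlt
  obtain ⟨U, hU, -, hsum⟩ := hlt
  have hU_sum : ∑' n, ediam (U n) ^ α < δ / 2 := by
    refine (ENNReal.tsum_le_tsum fun n => ?_).trans_lt hsum
    rcases (U n).eq_empty_or_nonempty with hn | hn <;> simp [hn, hα]
  obtain ⟨ε, hε, hε_sum⟩ := ENNReal.exists_pos_sum_of_countable hδ2 ℕ
  refine ⟨U, fun n => ediam (U n) ^ α + ε n, hU, fun n => ?_, fun n => le_self_add, ?_⟩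
  · simp [(hε n).ne']
  · rw [ENNReal.tsum_add, ← ENNReal.add_halves δ]
    exact ENNReal.add_lt_add hU_sum hε_sum

theorem hausdorffMeasure_ne_zero_of_forall_isSplitting [MeasurableSpace Y] [BorelSpace Y]
    {𝓐 : Set (Set Y)} {α c : ℝ} (hα : 0 < α) (hc : 0 < c) (hcpt : ∀ A ∈ 𝓐, IsCompact A)
    (hpos : ∀ A ∈ 𝓐, 0 < diam A)
    (hsplit : ∀ A ∈ 𝓐, ∃ 𝓑 : Finset (Set Y), ↑𝓑 ⊆ 𝓐 ∧ IsSplitting α c A 𝓑)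
    {A : Set Y} (hA : A ∈ 𝓐) : Measure.hausdorffMeasure α A ≠ 0 := by
  intro hzero
  have hδ : ENNReal.ofReal ((c * diam A) ^ α) ≠ 0 :=
    (ENNReal.ofReal_pos.2 (Real.rpow_pos_of_pos (mul_pos hc (hpos A hA)) α)).ne'
  obtain ⟨U, v, hU, hv0, hv, hlt⟩ := exists_cover_tsum_lt_of_hausdorffMeasure_eq_zero hα hzero hδ
  obtain ⟨y, hyA, hy⟩ := exists_mem_forall_notMem_of_coverCost_lt hα hc.le hcpt
    (fun B hB => nonempty_iff_ne_empty.2 fun h => by simpa [h] using hpos B hB)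
    hsplit hv0 hv hA ((coverCost_le_tsum U v A).trans_lt hlt)
  obtain ⟨n, hn⟩ := mem_iUnion.1 (hU hyA)
  exact hy n hn

end Splittings

section Sums

theorem sum_sum_update {ι κ M : Type*} [Fintype ι] [DecidableEq ι] [Fintype κ] [AddCommMonoid M]
    (i : ι) (w : (ι → κ) → M) :
    ∑ a : ι → κ, ∑ j, w (Function.update a i j) = Fintype.card κ • ∑ a, w a := by
  let swap : (ι → κ) × κ → (ι → κ) × κ := fun p => (Function.update p.1 i p.2, p.1 i)
  have hswap : Function.Involutive swap := fun p => by simp [swap]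
  calc ∑ a : ι → κ, ∑ j, w (Function.update a i j) = ∑ p, w (swap p).1 := by
        rw [Fintype.sum_prod_type]
    _ = ∑ p : (ι → κ) × κ, w p.1 := hswap.bijective.sum_comp fun p => w p.1
    _ = Fintype.card κ • ∑ a, w a := by
        simp [Fintype.sum_prod_type, Finset.sum_nsmul]

theorem pow_card_le_of_forall_le_sum_update {ι κ : Type*} [Fintype ι] [DecidableEq ι] [Fintype κ]
    [Nonempty κ] (i : ι) {w : (ι → κ) → ℝ} (hw : ∀ a, 0 ≤ w a) {W L : ℝ} (hW : 0 ≤ W) (hL : 0 ≤ L)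
    (hline : ∀ a, W ≤ L * ∑ j, w (Function.update a i j)) :
    W ^ Fintype.card ι ≤ L ^ Fintype.card ι * ∑ a, w a ^ Fintype.card ι := by
  obtain ⟨e, he⟩ : ∃ e, Fintype.card ι = e + 1 :=
    Nat.exists_eq_succ_of_ne_zero (Fintype.card_pos_iff.2 ⟨i⟩).ne'
  set k : ℝ := (Fintype.card κ : ℝ) with hk
  have hkpos : 0 < k := Nat.cast_pos.2 Fintype.card_pos
  have hcard : ((Finset.univ : Finset (ι → κ)).card : ℝ) = k ^ (e + 1) := by simp [hk, he]
  have haverage : k ^ e * W ≤ L * ∑ a, w a := by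
    refine le_of_mul_le_mul_left ?_ hkpos
    calc k * (k ^ e * W) = ∑ _a : ι → κ, W := by
          rw [Finset.sum_const, nsmul_eq_mul, hcard]; ring
      _ ≤ ∑ a, L * ∑ j, w (Function.update a i j) := Finset.sum_le_sum fun a _ => hline a
      _ = k * (L * ∑ a, w a) := by
          rw [← Finset.mul_sum, sum_sum_update, nsmul_eq_mul]; ring
  rw [he]
  refine le_of_mul_le_mul_left ?_ (pow_pos (pow_pos hkpos (e + 1)) e)
  calc (k ^ (e + 1)) ^ e * W ^ (e + 1) = (k ^ e * W) ^ (e + 1) := by ring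
    _ ≤ (L * ∑ a, w a) ^ (e + 1) := pow_le_pow_left₀ (by positivity) haverage _
    _ = L ^ (e + 1) * (∑ a, w a) ^ (e + 1) := mul_pow ..
    _ ≤ L ^ (e + 1) * ((∑ a, w a ^ (e + 1)) * (k ^ (e + 1)) ^ e) := by
        gcongr
        rw [← div_le_iff₀ (by positivity), ← hcard]
        exact pow_sum_div_card_le_sum_pow (fun a _ => hw a) e
    _ = (k ^ (e + 1)) ^ e * (L ^ (e + 1) * ∑ a, w a ^ (e + 1)) := by ring

theorem rpow_le_mul_sum_rpow {ι : Type*} {s : Finset ι} {w : ι → ℝ} {W B θ α p : ℝ}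
    (hαp : α ≤ p) (hB : 0 ≤ B) (hθ : 0 ≤ θ) (hW : 0 < W) (hw : ∀ a ∈ s, 0 < w a)
    (hle : ∀ a ∈ s, w a ≤ θ * W) (hsum : W ^ p ≤ B * ∑ a ∈ s, w a ^ p) :
    W ^ α ≤ B * θ ^ (p - α) * ∑ a ∈ s, w a ^ α := by
  have hsplit {x : ℝ} (hx : 0 < x) : x ^ p = x ^ (p - α) * x ^ α := by
    rw [← Real.rpow_add hx, sub_add_cancel]
  refine le_of_mul_le_mul_left ?_ (Real.rpow_pos_of_pos hW (p - α))
  calc W ^ (p - α) * W ^ α = W ^ p := (hsplit hW).symm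
    _ ≤ B * ∑ a ∈ s, w a ^ p := hsum
    _ ≤ B * ∑ a ∈ s, (θ * W) ^ (p - α) * w a ^ α := by
        gcongr with a ha
        rw [hsplit (hw a ha)]
        exact mul_le_mul_of_nonneg_right
          (Real.rpow_le_rpow (hw a ha).le (hle a ha) (sub_nonneg.2 hαp))
          (Real.rpow_nonneg (hw a ha).le α)
    _ = W ^ (p - α) * (B * θ ^ (p - α) * ∑ a ∈ s, w a ^ α) := by
        rw [← Finset.mul_sum, Real.mul_rpow hθ hW.le]; ring

theorem sum_comp_update_id_le {ι : Type*} [Fintype ι] [DecidableEq ι] {g : ι → ℝ}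
    (hg : ∀ a, 0 ≤ g a) {a₀ b₀ : ι} (hb₀ : b₀ ≠ a₀) :
    ∑ a, g (Function.update id a₀ b₀ a) ≤ 2 * ∑ a ∈ Finset.univ.erase a₀, g a := by
  have hrest : ∑ a ∈ Finset.univ.erase a₀, g (Function.update id a₀ b₀ a) =
      ∑ a ∈ Finset.univ.erase a₀, g a :=
    Finset.sum_congr rfl fun a ha => by
      rw [Function.update_of_ne (Finset.ne_of_mem_erase ha), id]
  rw [← Finset.add_sum_erase _ _ (Finset.mem_univ a₀), hrest, Function.update_self, two_mul]
  gcongr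
  exact Finset.single_le_sum (fun a _ => hg a) (Finset.mem_erase.2 ⟨hb₀, Finset.mem_univ _⟩)

-- The subset is the heaviest of the `2 ^ card ι` classes of addresses with equal parities.
theorem exists_subset_sparse_le_sum {ι : Type*} [Fintype ι] {K : ℕ} {s : Finset (ι → Fin K)}
    {g : (ι → Fin K) → ℝ} {b : ℝ} (hb : 2 ^ Fintype.card ι * b ≤ ∑ a ∈ s, g a) :
    ∃ t ⊆ s, (t : Set (ι → Fin K)).Pairwise (fun a a' => ∃ i, 2 ≤ |(a i : ℝ) - (a' i : ℝ)|) ∧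
      b ≤ ∑ a ∈ t, g a := by
  let parity : (ι → Fin K) → ι → Bool := fun a i => (a i : ℕ).bodd
  obtain ⟨q, -, hq⟩ := Finset.exists_le_sum_fiber_of_maps_to_of_nsmul_le_sum
    (s := s) (t := Finset.univ) (f := parity) (w := g) (b := b) (fun _ _ => Finset.mem_univ _)
    Finset.univ_nonempty (by simpa using hb)
  refine ⟨s.filter (parity · = q), Finset.filter_subset _ _, fun a ha a' ha' hne => ?_, hq⟩
  obtain ⟨i, hi⟩ := Function.ne_iff.1 hne
  have hpar : (a i : ℕ).bodd = (a' i : ℕ).bodd :=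
    congrFun ((Finset.mem_filter.1 ha).2.trans (Finset.mem_filter.1 ha').2.symm) i
  rw [← Fin.val_ne_iff] at hi
  have hgap : (2 : ℤ) ≤ |(a i : ℤ) - (a' i : ℤ)| := by
    have := Nat.mod_two_of_bodd (a i : ℕ)
    have := Nat.mod_two_of_bodd (a' i : ℕ)
    grind
  exact ⟨i, by exact_mod_cast hgap⟩

theorem dist_zero_last_le_sum {Y : Type*} [PseudoMetricSpace Y] {k : ℕ} (p : Fin (k + 1) → Y) :
    dist (p 0) (p (Fin.last k)) ≤ ∑ j : Fin k, dist (p j.castSucc) (p j.succ) := by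
  induction k with
  | zero => simp
  | succ k ih =>
    rw [Fin.sum_univ_castSucc]
    exact (dist_triangle _ _ _).trans (add_le_add_left (ih fun j => p j.castSucc) _)

end Sums

theorem exists_third_diam_le_dist {X : Type*} [PseudoMetricSpace X] {E : Set X} (hE : 0 < diam E)
    (x : X) : ∃ z ∈ E, diam E / 3 ≤ dist x z := by
  by_contra! h
  have hdiam : diam E ≤ 2 / 3 * diam E :=
    diam_le_of_forall_dist_le (by positivity) fun y hy z hz => by
      linarith [dist_triangle_left y z x, h y hy, h z hz]
  linarith

theorem isBounded_of_diam_pos {X : Type*} [PseudoMetricSpace X] {E : Set X} (hE : 0 < diam E) :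
    Bornology.IsBounded E :=
  not_imp_comm.1 diam_eq_zero_of_unbounded hE.ne'

namespace IsQSOn

variable {X Y : Type*} [MetricSpace X] [MetricSpace Y] {η : ℝ → ℝ} {f : X → Y} {A B E F : Set X}
  {s t : ℝ} {x y z : X}

theorem dist_le (hf : IsQSOn η f F) (hη : MonotoneOn η (Ici 0)) (hx : x ∈ F) (hy : y ∈ F)
    (hz : z ∈ F) (hxz : x ≠ z) (hxy : dist x y ≤ t * dist x z) :
    dist (f x) (f y) ≤ η t * dist (f x) (f z) := by
  have hratio : dist x y / dist x z ≤ t := (div_le_iff₀ (dist_pos.2 hxz)).2 hxy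
  have hratio_nonneg : 0 ≤ dist x y / dist x z := by positivity
  refine (hf.2 x hx y hy z hz hxz).trans ?_
  gcongr
  exact hη hratio_nonneg (hratio_nonneg.trans hratio) hratio

theorem nonneg (hf : IsQSOn η f F) (hη : MonotoneOn η (Ici 0)) (hF : F.Nontrivial) (ht : 0 ≤ t) :
    0 ≤ η t := by
  obtain ⟨x, hx, z, hz, hxz⟩ := hF
  have hle := hf.dist_le hη hx hx hz hxz (t := t) (by rw [dist_self]; positivity)
  rw [dist_self] at hle
  exact nonneg_of_mul_nonneg_left hle (dist_pos.2 (hf.1.ne hx hz hxz))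

theorem one_le (hf : IsQSOn η f F) (hη : MonotoneOn η (Ici 0)) (hF : F.Nontrivial) (ht : 1 ≤ t) :
    1 ≤ η t := by
  obtain ⟨x, hx, z, hz, hxz⟩ := hF
  have hle := hf.dist_le hη hx hz hz hxz (le_mul_of_one_le_left dist_nonneg ht)
  exact (le_mul_iff_one_le_left (dist_pos.2 (hf.1.ne hx hz hxz))).1 hle

theorem isBounded_image (hf : IsQSOn η f F) (hη : MonotoneOn η (Ici 0)) (hEF : E ⊆ F)
    (hE : Bornology.IsBounded E) : Bornology.IsBounded (f '' E) := by
  rcases E.subsingleton_or_nontrivial with hsub | ⟨x, hx, z, hz, hxz⟩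
  · exact (hsub.image f).finite.isBounded
  · refine isBounded_closedBall.subset (t := closedBall (f x)
      (η (diam E / dist x z) * dist (f x) (f z))) ?_
    rintro _ ⟨y, hy, rfl⟩
    rw [mem_closedBall']
    refine hf.dist_le hη (hEF hx) (hEF hy) (hEF hz) hxz ?_
    rw [div_mul_cancel₀ _ (dist_pos.2 hxz).ne']
    exact dist_le_diam_of_mem hE hx hy

theorem dist_le_mul_diam_image (hf : IsQSOn η f F) (hη : MonotoneOn η (Ici 0)) (hEF : E ⊆ F)
    (hE : 0 < diam E) (hx : x ∈ E) (hy : y ∈ F) (hxy : 3 * dist x y ≤ t * diam E) :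
    dist (f x) (f y) ≤ η t * diam (f '' E) := by
  obtain ⟨z, hz, hxz⟩ := exists_third_diam_le_dist hE x
  have hne : x ≠ z := dist_pos.1 (by linarith)
  have ht : 0 ≤ t := nonneg_of_mul_nonneg_left (hxy.trans' (by positivity)) hE
  calc dist (f x) (f y) ≤ η t * dist (f x) (f z) :=
        hf.dist_le hη (hEF hx) hy (hEF hz) hne (by nlinarith)
    _ ≤ η t * diam (f '' E) :=
        mul_le_mul_of_nonneg_left
          (dist_le_diam_of_mem (hf.isBounded_image hη hEF (isBounded_of_diam_pos hE))
            (mem_image_of_mem f hx) (mem_image_of_mem f hz))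
          (hf.nonneg hη ⟨x, hEF hx, z, hEF hz, hne⟩ ht)

theorem diam_image_pos (hf : IsQSOn η f F) (hη : MonotoneOn η (Ici 0)) (hEF : E ⊆ F)
    (hE : 0 < diam E) : 0 < diam (f '' E) := by
  obtain ⟨x, hx⟩ : E.Nonempty := nonempty_iff_ne_empty.2 fun h => by simp [h] at hE
  obtain ⟨z, hz, hxz⟩ := exists_third_diam_le_dist hE x
  have hne : x ≠ z := dist_pos.1 (by linarith)
  exact (dist_pos.2 (hf.1.ne (hEF hx) (hEF hz) hne)).trans_le <|
    dist_le_diam_of_mem (hf.isBounded_image hη hEF (isBounded_of_diam_pos hE))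
      (mem_image_of_mem f hx) (mem_image_of_mem f hz)

theorem diam_image_le_mul_dist (hf : IsQSOn η f F) (hη : MonotoneOn η (Ici 0)) (hEF : E ⊆ F)
    (hE : Bornology.IsBounded E) (hx : x ∈ E) (hy : y ∈ F) (hxy : x ≠ y)
    (hdiam : diam E ≤ s * dist x y) : diam (f '' E) ≤ 2 * η s * dist (f x) (f y) := by
  have hdist (u : X) (hu : u ∈ E) : dist (f x) (f u) ≤ η s * dist (f x) (f y) :=
    hf.dist_le hη (hEF hx) (hEF hu) hy hxy ((dist_le_diam_of_mem hE hx hu).trans hdiam)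
  have hnonneg := dist_nonneg.trans (hdist x hx)
  refine diam_le_of_forall_dist_le (by linarith) ?_
  rintro _ ⟨u, hu, rfl⟩ _ ⟨v, hv, rfl⟩
  linarith [dist_triangle_left (f u) (f v) (f x), hdist u hu, hdist v hv]

theorem diam_image_le_of_diam_le (hf : IsQSOn η f F) (hη : MonotoneOn η (Ici 0)) (hAB : A ⊆ B)
    (hBF : B ⊆ F) (hB : 0 < diam B) (ht : 0 ≤ t) (hdiam : 3 * diam A ≤ t * diam B) :
    diam (f '' A) ≤ η t * diam (f '' B) := by
  have hBbdd := isBounded_of_diam_pos hB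
  have hFnt : F.Nontrivial :=
    not_subsingleton_iff.1 fun h => hB.ne' (diam_subsingleton (h.anti hBF))
  refine diam_le_of_forall_dist_le (mul_nonneg (hf.nonneg hη hFnt ht) diam_nonneg) ?_
  rintro _ ⟨x, hx, rfl⟩ _ ⟨y, hy, rfl⟩
  refine hf.dist_le_mul_diam_image hη hBF hB (hAB hx) (hBF (hAB hy)) (hdiam.trans' ?_)
  gcongr
  exact dist_le_diam_of_mem (hBbdd.subset hAB) hx hy

theorem diam_image_le_of_subset (hf : IsQSOn η f F) (hη : MonotoneOn η (Ici 0)) (hAB : A ⊆ B)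
    (hBF : B ⊆ F) (hB : Bornology.IsBounded B) (hA : 0 < diam A)
    (hdiam : 3 * diam B ≤ t * diam A) : diam (f '' B) ≤ 2 * η t * diam (f '' A) := by
  obtain ⟨x, hx⟩ : A.Nonempty := nonempty_iff_ne_empty.2 fun h => by simp [h] at hA
  have hdist (y : X) (hy : y ∈ B) : dist (f x) (f y) ≤ η t * diam (f '' A) :=
    hf.dist_le_mul_diam_image hη (hAB.trans hBF) hA hx (hBF hy)
      (hdiam.trans' (by gcongr; exact dist_le_diam_of_mem hB (hAB hx) hy))
  have hnonneg := dist_nonneg.trans (hdist x (hAB hx))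
  refine diam_le_of_forall_dist_le (by linarith) ?_
  rintro _ ⟨u, hu, rfl⟩ _ ⟨v, hv, rfl⟩
  linarith [dist_triangle_left (f u) (f v) (f x), hdist u hu, hdist v hv]

theorem continuousOn (hf : IsQSOn η f F) (hη : Tendsto η (nhdsWithin 0 (Ioi 0)) (nhds 0)) :
    ContinuousOn f F := by
  intro x hx
  rw [← continuousWithinAt_sdiff_self]
  rcases (F \ {x}).eq_empty_or_nonempty with hempty | ⟨z, hz, hzx⟩
  · simp [ContinuousWithinAt, hempty]
  have hpos : 0 < dist x z := dist_pos.2 fun h => hzx h.symm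
  have hratio : Tendsto (fun y => dist x y / dist x z) (nhdsWithin x (F \ {x}))
      (nhdsWithin 0 (Ioi 0)) := by
    refine tendsto_nhdsWithin_iff.2 ⟨?_, eventually_mem_nhdsWithin.mono fun y hy =>
      div_pos (dist_pos.2 fun h => hy.2 h.symm) hpos⟩
    have hcont : Continuous fun y => dist x y / dist x z := by fun_prop
    simpa using (hcont.tendsto x).mono_left nhdsWithin_le_nhds
  refine tendsto_iff_dist_tendsto_zero.2 (squeeze_zero' (.of_forall fun _ => dist_nonneg)
    (eventually_mem_nhdsWithin.mono fun y hy => ?_)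
    (by simpa using (hη.comp hratio).mul_const (dist (f x) (f z))))
  rw [dist_comm]
  exact hf.2 x hx y hy.1 z hz (dist_pos.1 hpos)

end IsQSOn

section Cubes

theorem dist_le_card_mul {ι : Type*} [Fintype ι] {x y : EuclideanSpace ℝ ι} {M : ℝ} (hM : 0 ≤ M)
    (h : ∀ i, |x i - y i| ≤ M) : dist x y ≤ Fintype.card ι * M := by
  rw [EuclideanSpace.dist_eq]
  refine Real.sqrt_le_iff.2 ⟨by positivity, ?_⟩
  calc ∑ i, dist (x i) (y i) ^ 2 ≤ ∑ _i : ι, M ^ 2 := by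
        gcongr with i
        exact h i
    _ = Fintype.card ι * M ^ 2 := by simp
    _ ≤ (Fintype.card ι * M) ^ 2 := by
        rw [mul_pow]
        gcongr
        exact_mod_cast Nat.le_self_pow two_ne_zero _

variable {d K : ℕ} {c : Fin d → ℝ} {l : ℝ} {a b : Fin d → Fin K} {x y : EuclideanSpace ℝ (Fin d)}

theorem dist_le_of_mem_cube (hl : 0 ≤ l) (hx : x ∈ cube c l) (hy : y ∈ cube c l) :
    dist x y ≤ d * l := by
  have hcoord (i : Fin d) : |x i - y i| ≤ l :=
    abs_sub_le_iff.2 ⟨by linarith [(hx i).2, (hy i).1], by linarith [(hx i).1, (hy i).2]⟩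
  simpa using dist_le_card_mul hl hcoord

theorem isClosed_cube (c : Fin d → ℝ) (l : ℝ) : IsClosed (cube c l) := by
  simp only [cube, ofPred_forall, ofPred_and]
  refine isClosed_iInter fun i => ?_
  have hcont : Continuous fun x : EuclideanSpace ℝ (Fin d) => x i := by fun_prop
  exact (isClosed_le continuous_const hcont).inter (isClosed_le hcont continuous_const)

theorem isBounded_cube (c : Fin d → ℝ) (hl : 0 ≤ l) : Bornology.IsBounded (cube c l) :=
  isBounded_iff.2 ⟨d * l, fun _ hx _ hy => dist_le_of_mem_cube hl hx hy⟩

theorem isCompact_cube (c : Fin d → ℝ) (hl : 0 ≤ l) : IsCompact (cube c l) :=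
  isCompact_of_isClosed_isBounded (isClosed_cube c l) (isBounded_cube c hl)

theorem cube_nonempty (c : Fin d → ℝ) (hl : 0 ≤ l) : (cube c l).Nonempty :=
  ⟨WithLp.toLp 2 c, fun i => by simp [hl]⟩

/-- The subcube with address `a` when `cube c l` is divided into `K ^ d` congruent subcubes. -/
def subcube (c : Fin d → ℝ) (l : ℝ) (K : ℕ) (a : Fin d → Fin K) : Set (EuclideanSpace ℝ (Fin d)) :=
  cube (childCorner c l K a) (l / K)

theorem subcube_subset_cube (hl : 0 ≤ l) (c : Fin d → ℝ) (a : Fin d → Fin K) :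
    subcube c l K a ⊆ cube c l := by
  intro x hx i
  obtain ⟨hlow, hup⟩ := hx i
  have haK : (a i : ℝ) + 1 ≤ K := by exact_mod_cast (a i).isLt
  have hside : l / K * (a i + 1 : ℝ) ≤ l / K * K := by gcongr
  rw [div_mul_cancel₀ l (Nat.cast_ne_zero.2 (Fin.pos (a i)).ne')] at hside
  have hcorner : 0 ≤ l / K * (a i : ℝ) := by positivity
  simp only [childCorner] at hlow hup
  constructor <;> linarith

theorem dist_le_of_mem_subcube {M : ℝ} (hl : 0 ≤ l) (hM : 0 ≤ M)
    (hab : ∀ i, |(a i : ℝ) - b i| ≤ M) (hx : x ∈ subcube c l K a) (hy : y ∈ subcube c l K b) :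
    dist x y ≤ d * ((M + 1) * (l / K)) := by
  have hcoord (i : Fin d) : |x i - y i| ≤ (M + 1) * (l / K) := by
    have hs : 0 ≤ l / K := by positivity
    obtain ⟨hab₁, hab₂⟩ := abs_sub_le_iff.1 (hab i)
    have := mul_le_mul_of_nonneg_left hab₁ hs
    have := mul_le_mul_of_nonneg_left hab₂ hs
    have hxi := hx i
    have hyi := hy i
    simp only [childCorner] at hxi hyi
    exact abs_sub_le_iff.2 ⟨by linarith, by linarith⟩
  simpa using dist_le_card_mul (by positivity) hcoord

theorem le_dist_of_mem_subcube (hx : x ∈ subcube c l K a) (hy : y ∈ subcube c l K b) (i : Fin d) :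
    (|(a i : ℝ) - b i| - 1) * (l / K) ≤ dist x y := by
  have hcoord : |x i - y i| ≤ dist x y := PiLp.dist_apply_le x y i
  have hxi := hx i
  have hyi := hy i
  simp only [childCorner] at hxi hyi
  have hxy := abs_sub_le_iff.1 hcoord
  rcases abs_cases ((a i : ℝ) - b i) with ⟨h, -⟩ | ⟨h, -⟩ <;> rw [h] <;> linarith

theorem half_le_dist_of_mem_subcube (hl : 0 ≤ l) (hK : 8 ≤ K) (hx : x ∈ subcube c l K a)
    (hy : y ∈ subcube c l K b) {i : Fin d} (hab : K - 3 ≤ |(a i : ℝ) - b i|) :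
    l / 2 ≤ dist x y := by
  have hKl : l / K * 8 ≤ l := by
    rw [div_mul_eq_mul_div, div_le_iff₀ (by positivity)]; gcongr; exact_mod_cast hK
  calc l / 2 ≤ l - 4 * (l / K) := by linarith
    _ = (K - 4) * (l / K) := by field_simp
    _ ≤ (|(a i : ℝ) - b i| - 1) * (l / K) :=
        mul_le_mul_of_nonneg_right (by linarith) (by positivity)
    _ ≤ dist x y := le_dist_of_mem_subcube hx hy i

theorem half_le_diam_inter_cube [NeZero d] {F : Set (EuclideanSpace ℝ (Fin d))} (hl : 0 ≤ l)
    (hK : 8 ≤ K) {a₀ : Fin d → Fin K} (hne : ∀ a ≠ a₀, (F ∩ subcube c l K a).Nonempty) :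
    l / 2 ≤ diam (F ∩ cube c l) := by
  have hpick {j k : Fin K} (hjk : j ≠ k) : ∃ a ≠ a₀, a 0 = j ∨ a 0 = k := by
    by_cases hj : (fun _ => j) = a₀
    · exact ⟨fun _ => k, fun hk => hjk (congrFun (hj.trans hk.symm) 0), Or.inr rfl⟩
    · exact ⟨fun _ => j, hj, Or.inl rfl⟩
  obtain ⟨a, ha, ha_low⟩ := hpick (j := ⟨0, by lia⟩) (k := ⟨1, by lia⟩) (by simp)
  obtain ⟨b, hb, hb_high⟩ := hpick (j := ⟨K - 2, by lia⟩) (k := ⟨K - 1, by lia⟩)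
    (by simp only [ne_eq, Fin.mk.injEq]; lia)
  obtain ⟨x, hxF, hx⟩ := hne a ha
  obtain ⟨y, hyF, hy⟩ := hne b hb
  have hgap : (K : ℝ) - 3 ≤ |(a 0 : ℝ) - b 0| := by
    have hgap_nat : K ≤ (b 0 : ℕ) - a 0 + 3 := by
      rcases ha_low with h | h <;> rcases hb_high with h' | h' <;> rw [h, h'] <;> simp only <;> lia
    have hgap_real : (K : ℝ) ≤ b 0 - a 0 + 3 := by
      rw [← Nat.cast_sub (by lia)]; exact_mod_cast hgap_nat
    linarith [neg_le_abs ((a 0 : ℝ) - b 0)]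
  exact (half_le_dist_of_mem_subcube hl hK hx hy hgap).trans <|
    dist_le_diam_of_mem ((isBounded_cube c hl).subset inter_subset_right)
      ⟨hxF, subcube_subset_cube hl c a hx⟩ ⟨hyF, subcube_subset_cube hl c b hy⟩

theorem exists_map_ne_abs_sub_le_one {ι : Type*} [Fintype ι] [DecidableEq ι] [Nonempty ι]
    (hK : 2 ≤ K) (a₀ : ι → Fin K) :
    ∃ r : (ι → Fin K) → ι → Fin K, (∀ a, r a ≠ a₀) ∧ (∀ a i, |(r a i : ℝ) - a i| ≤ 1) ∧
      ∀ g : (ι → Fin K) → ℝ, (∀ a, 0 ≤ g a) →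
        ∑ a, g (r a) ≤ 2 * ∑ a ∈ Finset.univ.erase a₀, g a := by
  have hnear (j : Fin K) : ∃ k ≠ j, |(k : ℝ) - j| ≤ 1 := by
    by_cases hj : (j : ℕ) = 0
    · exact ⟨⟨1, hK⟩, by simp [Fin.ext_iff, hj], by simp [hj]⟩
    · refine ⟨⟨j - 1, by lia⟩, by simp only [ne_eq, Fin.ext_iff]; lia, ?_⟩
      rw [Nat.cast_pred (Nat.pos_of_ne_zero hj)]
      simp
  choose near hne hle using hnear
  have hb₀ : (fun i => near (a₀ i)) ≠ a₀ := fun h =>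
    hne _ (congrFun h (Classical.arbitrary ι))
  refine ⟨Function.update id a₀ fun i => near (a₀ i), fun a => ?_, fun a i => ?_,
    fun g hg => sum_comp_update_id_le hg hb₀⟩ <;> rcases eq_or_ne a a₀ with rfl | ha
  · simpa using hb₀
  · simp [ha]
  · simp [hle]
  · simp [ha]

end Cubes

/-- `F` looks like a fat Cantor set in `cube c l` at one scale: when this cube is divided into
`K ^ d` subcubes, `F` spreads over at least half the side of each of them other than the one with
address `a₀`. -/
structure IsFatCell {d : ℕ} (F : Set (EuclideanSpace ℝ (Fin d))) (c : Fin d → ℝ) (l : ℝ) (K : ℕ)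
    (a₀ : Fin d → Fin K) : Prop where
  side_pos : 0 < l
  eight_le : 8 ≤ K
  half_le_diam_subcube : ∀ a ≠ a₀, l / K / 2 ≤ diam (F ∩ subcube c l K a)

namespace IsFatCell

variable {d K : ℕ} {F : Set (EuclideanSpace ℝ (Fin d))} {c : Fin d → ℝ} {l : ℝ}
  {a₀ : Fin d → Fin K} {Y : Type*} [MetricSpace Y] {η : ℝ → ℝ} {f : EuclideanSpace ℝ (Fin d) → Y}

theorem subcube_side_pos (h : IsFatCell F c l K a₀) : 0 < l / K :=
  div_pos h.side_pos (Nat.cast_pos.2 (by linarith [h.eight_le]))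

theorem diam_subcube_pos (h : IsFatCell F c l K a₀) {a : Fin d → Fin K} (ha : a ≠ a₀) :
    0 < diam (F ∩ subcube c l K a) :=
  (half_pos h.subcube_side_pos).trans_le (h.half_le_diam_subcube a ha)

theorem nonempty_subcube (h : IsFatCell F c l K a₀) {a : Fin d → Fin K} (ha : a ≠ a₀) :
    (F ∩ subcube c l K a).Nonempty :=
  nonempty_iff_ne_empty.2 fun hempty => by simpa [hempty] using h.diam_subcube_pos ha

theorem half_le_diam [NeZero d] (h : IsFatCell F c l K a₀) : l / 2 ≤ diam (F ∩ cube c l) :=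
  half_le_diam_inter_cube h.side_pos.le h.eight_le fun _ ha => h.nonempty_subcube ha

theorem diam_pos [NeZero d] (h : IsFatCell F c l K a₀) : 0 < diam (F ∩ cube c l) :=
  (half_pos h.side_pos).trans_le h.half_le_diam

theorem nontrivial [NeZero d] (h : IsFatCell F c l K a₀) : F.Nontrivial :=
  not_subsingleton_iff.1 fun hF =>
    h.diam_pos.ne' (diam_subsingleton (hF.anti inter_subset_left))

theorem diam_subcube_le (h : IsFatCell F c l K a₀) (a : Fin d → Fin K) :
    diam (F ∩ subcube c l K a) ≤ d * (l / K) :=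
  diam_le_of_forall_dist_le (mul_nonneg d.cast_nonneg h.subcube_side_pos.le) fun _ hx _ hy =>
    dist_le_of_mem_cube h.subcube_side_pos.le hx.2 hy.2

theorem diam_le (h : IsFatCell F c l K a₀) : diam (F ∩ cube c l) ≤ d * l :=
  diam_le_of_forall_dist_le (mul_nonneg d.cast_nonneg h.side_pos.le) fun _ hx _ hy =>
    dist_le_of_mem_cube h.side_pos.le hx.2 hy.2

theorem inter_subcube_subset (h : IsFatCell F c l K a₀) (a : Fin d → Fin K) :
    F ∩ subcube c l K a ⊆ F ∩ cube c l :=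
  inter_subset_inter_right _ (subcube_subset_cube h.side_pos.le c a)

theorem isBounded (h : IsFatCell F c l K a₀) : Bornology.IsBounded (F ∩ cube c l) :=
  (isBounded_cube c h.side_pos.le).subset inter_subset_right

theorem diam_image_subcube_le [NeZero d] (h : IsFatCell F c l K a₀) (hf : IsQSOn η f F)
    (hη : MonotoneOn η (Ici 0)) (a : Fin d → Fin K) :
    diam (f '' (F ∩ subcube c l K a)) ≤ η (6 * d / K) * diam (f '' (F ∩ cube c l)) := by
  refine hf.diam_image_le_of_diam_le hη (h.inter_subcube_subset a) inter_subset_left h.diam_pos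
    (by positivity) ?_
  calc 3 * diam (F ∩ subcube c l K a) ≤ 3 * (d * (l / K)) := by gcongr; exact h.diam_subcube_le a
    _ = 6 * d / K * (l / 2) := by ring
    _ ≤ 6 * d / K * diam (F ∩ cube c l) := by gcongr; exact h.half_le_diam

theorem diam_image_le_mul_subcube (h : IsFatCell F c l K a₀) (hf : IsQSOn η f F)
    (hη : MonotoneOn η (Ici 0)) {a : Fin d → Fin K} (ha : a ≠ a₀) :
    diam (f '' (F ∩ cube c l)) ≤ 2 * η (6 * d * K) * diam (f '' (F ∩ subcube c l K a)) := by
  have hK : (K : ℝ) ≠ 0 := fun hK => by simpa [hK] using h.subcube_side_pos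
  refine hf.diam_image_le_of_subset hη (h.inter_subcube_subset a) inter_subset_left h.isBounded
    (h.diam_subcube_pos ha) ?_
  calc 3 * diam (F ∩ cube c l) ≤ 3 * (d * l) := by gcongr; exact h.diam_le
    _ = 6 * d * K * (l / K / 2) := by field_simp; ring
    _ ≤ 6 * d * K * diam (F ∩ subcube c l K a) := by gcongr; exact h.half_le_diam_subcube a ha

theorem diam_image_subcube_le_mul_dist (h : IsFatCell F c l K a₀) (hf : IsQSOn η f F)
    (hη : MonotoneOn η (Ici 0)) {a b : Fin d → Fin K} {i : Fin d} (hab : 2 ≤ |(a i : ℝ) - b i|)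
    {x y : EuclideanSpace ℝ (Fin d)} (hx : x ∈ F ∩ subcube c l K a)
    (hy : y ∈ F ∩ subcube c l K b) :
    diam (f '' (F ∩ subcube c l K a)) ≤ 2 * η (24 * d) * dist (f x) (f y) := by
  have hs := h.subcube_side_pos
  have hdist : l / K ≤ dist x y :=
    (le_mul_of_one_le_left hs.le (by linarith)).trans (le_dist_of_mem_subcube hx.2 hy.2 i)
  refine hf.diam_image_le_mul_dist hη inter_subset_left
    (h.isBounded.subset (h.inter_subcube_subset a)) hx hy.1 (dist_pos.1 (hs.trans_le hdist)) ?_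
  calc diam (F ∩ subcube c l K a) ≤ d * (l / K) := h.diam_subcube_le a
    _ ≤ 24 * d * dist x y := by gcongr; linarith [d.cast_nonneg (α := ℝ)]

theorem dist_image_le_of_abs_sub_le (h : IsFatCell F c l K a₀) (hf : IsQSOn η f F)
    (hη : MonotoneOn η (Ici 0)) {a b : Fin d → Fin K} (ha : a ≠ a₀)
    (hab : ∀ i, |(a i : ℝ) - b i| ≤ 3) {x y : EuclideanSpace ℝ (Fin d)}
    (hx : x ∈ F ∩ subcube c l K a) (hy : y ∈ F ∩ subcube c l K b) :
    dist (f x) (f y) ≤ η (24 * d) * diam (f '' (F ∩ subcube c l K a)) := by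
  refine hf.dist_le_mul_diam_image hη inter_subset_left (h.diam_subcube_pos ha) hx hy.1 ?_
  calc 3 * dist x y ≤ 3 * (d * ((3 + 1) * (l / K))) := by
        gcongr
        exact dist_le_of_mem_subcube h.side_pos.le (by norm_num) hab hx.2 hy.2
    _ = 24 * d * (l / K / 2) := by ring
    _ ≤ 24 * d * diam (F ∩ subcube c l K a) := by gcongr; exact h.half_le_diam_subcube a ha

theorem diam_image_le_mul_dist_of_far (h : IsFatCell F c l K a₀) (hf : IsQSOn η f F)
    (hη : MonotoneOn η (Ici 0)) {a b : Fin d → Fin K} {i : Fin d}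
    (hab : K - 3 ≤ |(a i : ℝ) - b i|) {x y : EuclideanSpace ℝ (Fin d)}
    (hx : x ∈ F ∩ subcube c l K a) (hy : y ∈ F ∩ subcube c l K b) :
    diam (f '' (F ∩ cube c l)) ≤ 2 * η (24 * d) * dist (f x) (f y) := by
  have hdist : l / 2 ≤ dist x y :=
    half_le_dist_of_mem_subcube h.side_pos.le h.eight_le hx.2 hy.2 hab
  have hxy : x ≠ y := dist_pos.1 ((half_pos h.side_pos).trans_le hdist)
  refine hf.diam_image_le_mul_dist hη inter_subset_left h.isBounded
    (h.inter_subcube_subset a hx) hy.1 hxy ?_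
  calc diam (F ∩ cube c l) ≤ d * l := h.diam_le
    _ ≤ d * (24 * dist x y) := by gcongr; linarith [h.side_pos]
    _ = 24 * d * dist x y := by ring

-- Replacing the removed subcube by a neighbour (the map `r`) turns a line of subcubes into a chain
-- joining opposite sides of the cube, so the images of the chain carry the diameter.
theorem diam_image_le_sum_line [NeZero d] (h : IsFatCell F c l K a₀) (hf : IsQSOn η f F)
    (hη : MonotoneOn η (Ici 0)) {r : (Fin d → Fin K) → Fin d → Fin K} (hr : ∀ a, r a ≠ a₀)
    (hra : ∀ a i, |(r a i : ℝ) - a i| ≤ 1) (a : Fin d → Fin K) :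
    diam (f '' (F ∩ cube c l)) ≤ 2 * η (24 * d) ^ 2 *
      ∑ j, diam (f '' (F ∩ subcube c l K (r (Function.update a 0 j)))) := by
  obtain ⟨k, rfl⟩ : ∃ k, K = k + 1 := Nat.exists_eq_succ_of_ne_zero (by linarith [h.eight_le])
  set q : Fin (k + 1) → Fin d → Fin (k + 1) := fun j => r (Function.update a 0 j)
  have hη_nonneg : 0 ≤ η (24 * d) := hf.nonneg hη h.nontrivial (by positivity)
  choose p hp using fun j => h.nonempty_subcube (hr (Function.update a 0 j))
  have hstep (j : Fin k) : dist (f (p j.castSucc)) (f (p j.succ)) ≤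
      η (24 * d) * diam (f '' (F ∩ subcube c l (k + 1) (q j.castSucc))) := by
    refine h.dist_image_le_of_abs_sub_le hf hη (hr _) (fun i => ?_) (hp _) (hp _)
    have hupdate : |(Function.update a 0 j.castSucc i : ℝ) - Function.update a 0 j.succ i| ≤ 1 := by
      rcases eq_or_ne i 0 with rfl | hi
      · simp
      · simp [hi]
    have h₁ := hra (Function.update a 0 j.castSucc) i
    have h₂ := hra (Function.update a 0 j.succ) i
    rw [abs_le] at *
    constructor <;> linarith
  have hends : ((k + 1 : ℕ) : ℝ) - 3 ≤ |(q 0 0 : ℝ) - q (Fin.last k) 0| := by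
    have h₁ := hra (Function.update a 0 0) 0
    have h₂ := hra (Function.update a 0 (Fin.last k)) 0
    simp only [Function.update_self, Fin.val_zero, Fin.val_last, abs_le] at h₁ h₂
    push_cast at h₁ h₂ ⊢
    linarith [neg_le_abs ((q 0 0 : ℝ) - q (Fin.last k) 0)]
  calc diam (f '' (F ∩ cube c l))
      ≤ 2 * η (24 * d) * dist (f (p 0)) (f (p (Fin.last k))) :=
        h.diam_image_le_mul_dist_of_far hf hη hends (hp _) (hp _)
    _ ≤ 2 * η (24 * d) * ∑ j : Fin k, dist (f (p j.castSucc)) (f (p j.succ)) := by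
        gcongr; exact dist_zero_last_le_sum fun j => f (p j)
    _ ≤ 2 * η (24 * d) *
          ∑ j : Fin k, η (24 * d) * diam (f '' (F ∩ subcube c l (k + 1) (q j.castSucc))) := by
        gcongr with j; exact hstep j
    _ ≤ 2 * η (24 * d) * ∑ j, η (24 * d) * diam (f '' (F ∩ subcube c l (k + 1) (q j))) := by
        rw [Fin.sum_univ_castSucc (n := k)]
        gcongr
        exact le_add_of_nonneg_right (by positivity)
    _ = _ := by rw [← Finset.mul_sum]; ring

theorem diam_image_pow_le [NeZero d] (h : IsFatCell F c l K a₀) (hf : IsQSOn η f F)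
    (hη : MonotoneOn η (Ici 0)) :
    diam (f '' (F ∩ cube c l)) ^ d ≤ 2 * (2 * η (24 * d) ^ 2) ^ d *
      ∑ a ∈ Finset.univ.erase a₀, diam (f '' (F ∩ subcube c l K a)) ^ d := by
  have : NeZero K := ⟨by linarith [h.eight_le]⟩
  obtain ⟨r, hr, hra, hsum⟩ := exists_map_ne_abs_sub_le_one (by linarith [h.eight_le]) a₀
  set w : (Fin d → Fin K) → ℝ := fun a => diam (f '' (F ∩ subcube c l K a))
  have hline := pow_card_le_of_forall_le_sum_update (w := w ∘ r) (0 : Fin d)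
    (fun _ => diam_nonneg) diam_nonneg (by positivity) (h.diam_image_le_sum_line hf hη hr hra)
  rw [Fintype.card_fin] at hline
  calc diam (f '' (F ∩ cube c l)) ^ d
      ≤ (2 * η (24 * d) ^ 2) ^ d * ∑ a, w (r a) ^ d := hline
    _ ≤ (2 * η (24 * d) ^ 2) ^ d * (2 * ∑ a ∈ Finset.univ.erase a₀, w a ^ d) := by
        gcongr
        exact hsum (fun a => w a ^ d) fun _ => pow_nonneg diam_nonneg d
    _ = _ := by ring

theorem two_pow_mul_rpow_diam_image_le [NeZero d] (h : IsFatCell F c l K a₀) (hf : IsQSOn η f F)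
    (hη : MonotoneOn η (Ici 0)) {α : ℝ} (hαd : α ≤ d)
    (hsmall : 2 ^ d * (2 * (2 * η (24 * d) ^ 2) ^ d) * η (6 * d / K) ^ (d - α) ≤ 1) :
    2 ^ d * diam (f '' (F ∩ cube c l)) ^ α ≤
      ∑ a ∈ Finset.univ.erase a₀, diam (f '' (F ∩ subcube c l K a)) ^ α := by
  have hrpow := rpow_le_mul_sum_rpow (B := 2 * (2 * η (24 * d) ^ 2) ^ d) hαd (by positivity)
    (hf.nonneg hη h.nontrivial (by positivity)) (hf.diam_image_pos hη inter_subset_left h.diam_pos)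
    (fun a ha => hf.diam_image_pos hη inter_subset_left
      (h.diam_subcube_pos (Finset.ne_of_mem_erase ha)))
    (fun a _ => h.diam_image_subcube_le hf hη a)
    (by simpa only [Real.rpow_natCast] using h.diam_image_pow_le hf hη)
  refine (mul_le_mul_of_nonneg_left hrpow (by positivity)).trans ?_
  rw [← mul_assoc, ← mul_assoc]
  exact mul_le_of_le_one_left (by positivity) hsmall

theorem inv_mul_diam_image_le_dist (h : IsFatCell F c l K a₀) (hf : IsQSOn η f F)
    (hη : MonotoneOn η (Ici 0)) {a b : Fin d → Fin K} (ha : a ≠ a₀) {i : Fin d}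
    (hab : 2 ≤ |(a i : ℝ) - b i|) {x y : EuclideanSpace ℝ (Fin d)}
    (hx : x ∈ F ∩ subcube c l K a) (hy : y ∈ F ∩ subcube c l K b) :
    (4 * η (6 * d * K) * η (24 * d))⁻¹ * diam (f '' (F ∩ cube c l)) ≤ dist (f x) (f y) := by
  have : NeZero d := ⟨(Fin.pos i).ne'⟩
  have hη_nonneg {t : ℝ} (ht : 0 ≤ t) : 0 ≤ η t := hf.nonneg hη h.nontrivial ht
  have hη₁ : 0 ≤ η (6 * d * K) := hη_nonneg (by positivity)
  have hη₂ : 0 ≤ η (24 * d) := hη_nonneg (by positivity)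
  refine inv_mul_le_of_le_mul₀ (by positivity) dist_nonneg ?_
  calc diam (f '' (F ∩ cube c l))
      ≤ 2 * η (6 * d * K) * diam (f '' (F ∩ subcube c l K a)) :=
        h.diam_image_le_mul_subcube hf hη ha
    _ ≤ 2 * η (6 * d * K) * (2 * η (24 * d) * dist (f x) (f y)) := by
        gcongr; exact h.diam_image_subcube_le_mul_dist hf hη hab hx hy
    _ = _ := by ring

theorem injOn_image_subcube (h : IsFatCell F c l K a₀) (hf : IsQSOn η f F)
    {s : Set (Fin d → Fin K)} (hs : a₀ ∉ s)
    (hsparse : s.Pairwise fun a b => ∃ i, 2 ≤ |(a i : ℝ) - b i|) :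
    Set.InjOn (fun a => f '' (F ∩ subcube c l K a)) s := by
  intro a ha b hb hab
  by_contra hne
  obtain ⟨i, hi⟩ := hsparse ha hb hne
  obtain ⟨x, hx⟩ := h.nonempty_subcube (ne_of_mem_of_not_mem ha hs)
  obtain ⟨y, hy, hyx⟩ := hab.subset (mem_image_of_mem f hx)
  obtain rfl : y = x := hf.1 hy.1 hx.1 hyx
  have hle := le_dist_of_mem_subcube hx.2 hy.2 i
  rw [dist_self] at hle
  exact hle.not_gt (mul_pos (by linarith) h.subcube_side_pos)

theorem exists_isSplitting [NeZero d] (h : IsFatCell F c l K a₀) (hf : IsQSOn η f F)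
    (hη : MonotoneOn η (Ici 0)) {α : ℝ} (hαd : α ≤ d) (hhalf : η (6 * d / K) ≤ 1 / 2)
    (hsmall : 2 ^ d * (2 * (2 * η (24 * d) ^ 2) ^ d) * η (6 * d / K) ^ (d - α) ≤ 1) :
    ∃ 𝓑 : Finset (Set Y), (∀ B ∈ 𝓑, ∃ a ≠ a₀, B = f '' (F ∩ subcube c l K a)) ∧
      IsSplitting α (4 * η (6 * d * K) * η (24 * d))⁻¹ (f '' (F ∩ cube c l)) 𝓑 := by
  obtain ⟨t, ht, hsparse, hsum⟩ := exists_subset_sparse_le_sum (s := Finset.univ.erase a₀)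
    (g := fun a => diam (f '' (F ∩ subcube c l K a)) ^ α)
    (by rw [Fintype.card_fin]; exact h.two_pow_mul_rpow_diam_image_le hf hη hαd hsmall)
  have hne {a} (ha : a ∈ t) : a ≠ a₀ := Finset.ne_of_mem_erase (ht ha)
  have hinj := h.injOn_image_subcube hf (fun ha => hne ha rfl) hsparse
  refine ⟨t.image fun a => f '' (F ∩ subcube c l K a),
    Finset.forall_mem_image.2 fun a ha => ⟨a, hne ha, rfl⟩,
    Finset.forall_mem_image.2 fun a _ => image_mono (h.inter_subcube_subset a),
    Finset.forall_mem_image.2 fun a _ => ?_, ?_, by rwa [Finset.sum_image hinj]⟩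
  · calc diam (f '' (F ∩ subcube c l K a))
        ≤ η (6 * d / K) * diam (f '' (F ∩ cube c l)) := h.diam_image_subcube_le hf hη a
      _ ≤ 1 / 2 * diam (f '' (F ∩ cube c l)) := by gcongr
      _ = _ := by ring
  · rw [Finset.coe_image, hinj.pairwise_image]
    rintro a ha b hb hab _ ⟨x, hx, rfl⟩ _ ⟨y, hy, rfl⟩
    obtain ⟨i, hi⟩ := hsparse ha hb hab
    exact h.inv_mul_diam_image_le_dist hf hη (hne ha) hi hx hy

end IsFatCell

section FatCantor

variable {d N m : ℕ}

theorem fatSide_nonneg (N m n : ℕ) : 0 ≤ fatSide N m n :=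
  inv_nonneg.2 (by positivity)

theorem fatSide_pos (hN : 0 < N ^ m) (n : ℕ) : 0 < fatSide N m n := by
  rw [fatSide, pow_mul]
  exact inv_pos.2 (pow_pos (mod_cast hN) n)

theorem fatSide_succ (N m n : ℕ) : fatSide N m (n + 1) = fatSide N m n / (N ^ m : ℕ) := by
  rw [fatSide, fatSide, mul_add_one, pow_add, mul_inv, div_eq_mul_inv, Nat.cast_pow]

namespace IsFatCantorFamilies

variable {𝓕 : ℕ → Set (Set (EuclideanSpace ℝ (Fin d)))} {Q : Set (EuclideanSpace ℝ (Fin d))} {n : ℕ}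

theorem exists_eq_cube (h : IsFatCantorFamilies d N m 𝓕) (hQ : Q ∈ 𝓕 n) :
    ∃ c a₀, Q = cube c (fatSide N m n) ∧
      {Q' ∈ 𝓕 (n + 1) | Q' ⊆ Q} = subcube c (fatSide N m n) (N ^ m) '' {a₀}ᶜ := by
  obtain ⟨c, hc, a₀, ha₀⟩ := h.2.1 n Q hQ
  refine ⟨c, a₀, hc, ha₀.trans ?_⟩
  ext Q'
  simp only [fatSide_succ, subcube, mem_ofPred_eq, mem_image, mem_compl_singleton_iff, eq_comm]

theorem isCompact_of_mem (h : IsFatCantorFamilies d N m 𝓕) (hQ : Q ∈ 𝓕 n) : IsCompact Q := by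
  obtain ⟨c, -, rfl, -⟩ := h.exists_eq_cube hQ
  exact isCompact_cube c (fatSide_nonneg N m n)

theorem nonempty_of_mem (h : IsFatCantorFamilies d N m 𝓕) (hQ : Q ∈ 𝓕 n) : Q.Nonempty := by
  obtain ⟨c, -, rfl, -⟩ := h.exists_eq_cube hQ
  exact cube_nonempty c (fatSide_nonneg N m n)

theorem finite (h : IsFatCantorFamilies d N m 𝓕) (n : ℕ) : (𝓕 n).Finite := by
  induction n with
  | zero => rw [h.1]; exact finite_singleton _
  | succ n ih =>
    refine (ih.biUnion (t := fun Q => {Q' ∈ 𝓕 (n + 1) | Q' ⊆ Q}) fun Q hQ => ?_).subset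
      fun Q' hQ' => ?_
    · obtain ⟨c, a₀, -, hchildren⟩ := h.exists_eq_cube hQ
      rw [hchildren]
      exact toFinite _
    · obtain ⟨Q, hQ, hQQ'⟩ := h.2.2 n Q' hQ'
      exact mem_biUnion hQ ⟨hQ', hQQ'⟩

theorem isCompact_sUnion (h : IsFatCantorFamilies d N m 𝓕) (n : ℕ) : IsCompact (⋃₀ 𝓕 n) :=
  (h.finite n).isCompact_sUnion fun _ => h.isCompact_of_mem

theorem isCompact_iInter (h : IsFatCantorFamilies d N m 𝓕) : IsCompact (⋂ n, ⋃₀ 𝓕 n) :=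
  (h.isCompact_sUnion 0).of_isClosed_subset
    (isClosed_iInter fun n => (h.isCompact_sUnion n).isClosed) (iInter_subset _ 0)

theorem antitone_sUnion (h : IsFatCantorFamilies d N m 𝓕) : Antitone fun n => ⋃₀ 𝓕 n :=
  antitone_nat_of_succ_le fun n => sUnion_subset fun Q' hQ' =>
    let ⟨_, hQ, hQQ'⟩ := h.2.2 n Q' hQ'
    subset_sUnion_of_subset _ _ hQQ' hQ

variable [NeZero d]

theorem exists_subset (h : IsFatCantorFamilies d N m 𝓕) (hN : 2 ≤ N ^ m) (hQ : Q ∈ 𝓕 n) (k : ℕ) :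
    ∃ Q' ∈ 𝓕 (n + k), Q' ⊆ Q := by
  induction k with
  | zero => exact ⟨Q, hQ, Subset.rfl⟩
  | succ k ih =>
    obtain ⟨P, hP, hPQ⟩ := ih
    obtain ⟨c, a₀, -, hchildren⟩ := h.exists_eq_cube hP
    have : Nontrivial (Fin (N ^ m)) := Fin.nontrivial_iff_two_le.2 hN
    obtain ⟨a, ha⟩ := exists_ne a₀
    obtain ⟨hmem, hsub⟩ := hchildren.superset (mem_image_of_mem _ ha)
    exact ⟨_, hmem, hsub.trans hPQ⟩

theorem nonempty_inter (h : IsFatCantorFamilies d N m 𝓕) (hN : 2 ≤ N ^ m) (hQ : Q ∈ 𝓕 n) :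
    ((⋂ k, ⋃₀ 𝓕 k) ∩ Q).Nonempty := by
  have hcpt (k : ℕ) : IsCompact (⋃₀ 𝓕 (n + k) ∩ Q) :=
    (h.isCompact_sUnion _).inter (h.isCompact_of_mem hQ)
  obtain ⟨x, hx⟩ := IsCompact.nonempty_iInter_of_sequence_nonempty_isCompact_isClosed
    (fun k => ⋃₀ 𝓕 (n + k) ∩ Q)
    (fun k => inter_subset_inter_left _ (h.antitone_sUnion (by lia)))
    (fun k => by
      obtain ⟨Q', hQ', hsub⟩ := h.exists_subset hN hQ k
      exact (h.nonempty_of_mem hQ').mono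
        (subset_inter (subset_sUnion_of_mem hQ') hsub))
    (hcpt 0) fun k => (hcpt k).isClosed
  rw [mem_iInter] at hx
  exact ⟨x, mem_iInter.2 fun k => h.antitone_sUnion (Nat.le_add_left k n) (hx k).1, (hx 0).2⟩

theorem half_fatSide_le_diam (h : IsFatCantorFamilies d N m 𝓕) (hN : 8 ≤ N ^ m) (hQ : Q ∈ 𝓕 n) :
    fatSide N m n / 2 ≤ diam ((⋂ k, ⋃₀ 𝓕 k) ∩ Q) := by
  obtain ⟨c, a₀, rfl, hchildren⟩ := h.exists_eq_cube hQ
  refine half_le_diam_inter_cube (a₀ := a₀) (fatSide_nonneg N m n) hN fun a ha => ?_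
  exact h.nonempty_inter (by lia) (hchildren.superset (mem_image_of_mem _ ha)).1

theorem exists_isFatCell (h : IsFatCantorFamilies d N m 𝓕) (hN : 8 ≤ N ^ m) (hQ : Q ∈ 𝓕 n) :
    ∃ c a₀, Q = cube c (fatSide N m n) ∧
      IsFatCell (⋂ k, ⋃₀ 𝓕 k) c (fatSide N m n) (N ^ m) a₀ ∧
      ∀ a ≠ a₀, subcube c (fatSide N m n) (N ^ m) a ∈ 𝓕 (n + 1) := by
  obtain ⟨c, a₀, hc, hchildren⟩ := h.exists_eq_cube hQ
  have hmem (a) (ha : a ≠ a₀) : subcube c (fatSide N m n) (N ^ m) a ∈ 𝓕 (n + 1) :=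
    (hchildren.superset (mem_image_of_mem _ ha)).1
  refine ⟨c, a₀, hc, ⟨fatSide_pos (by lia) n, hN, fun a ha => ?_⟩, hmem⟩
  rw [← fatSide_succ]
  exact h.half_fatSide_le_diam hN (hmem a ha)

end IsFatCantorFamilies

end FatCantor

theorem IsDistortion.tendsto_zero {η : ℝ → ℝ} (hη : IsDistortion η) :
    Tendsto η (nhdsWithin 0 (Ioi 0)) (nhds 0) := by
  simpa only [hη.2.2.1] using
    (hη.1 0 self_mem_Ici).tendsto.mono_left (nhdsWithin_mono 0 Ioi_subset_Ici_self)

theorem eventually_comp_div_natCast_small {η : ℝ → ℝ}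
    (hη : Tendsto η (nhdsWithin 0 (Ioi 0)) (nhds 0)) {b s : ℝ} (hb : 0 < b) (hs : 0 < s) (C : ℝ) :
    ∀ᶠ K : ℕ in atTop, η (b / K) ≤ 1 / 2 ∧ C * η (b / K) ^ s ≤ 1 := by
  have harg : Tendsto (fun K : ℕ => b / K) atTop (nhdsWithin 0 (Ioi 0)) :=
    tendsto_nhdsWithin_iff.2 ⟨tendsto_const_div_atTop_nhds_zero_nat b,
      (eventually_gt_atTop 0).mono fun K hK => div_pos hb (Nat.cast_pos.2 hK)⟩
  have hval := hη.comp harg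
  have hpow : Tendsto (fun K : ℕ => C * η (b / K) ^ s) atTop (nhds 0) := by
    simpa [Real.zero_rpow hs.ne'] using (hval.rpow_const (Or.inr hs.le)).const_mul C
  exact (hval.eventually_le_const one_half_pos).and (hpow.eventually_le_const one_pos)

theorem IsFatCantorFamilies.le_dimH_image {d N m : ℕ} [NeZero d]
    {𝓕 : ℕ → Set (Set (EuclideanSpace ℝ (Fin d)))} (h : IsFatCantorFamilies d N m 𝓕)
    (hN : 8 ≤ N ^ m) {Y : Type*} [MetricSpace Y] {η : ℝ → ℝ} {f : EuclideanSpace ℝ (Fin d) → Y}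
    (hf : IsQSOn η f (⋂ n, ⋃₀ 𝓕 n)) (hη : MonotoneOn η (Ici 0))
    (hη₀ : Tendsto η (nhdsWithin 0 (Ioi 0)) (nhds 0)) {α : ℝ} (hα : 0 < α) (hαd : α ≤ d)
    (hhalf : η (6 * d / (N ^ m : ℕ)) ≤ 1 / 2)
    (hsmall : 2 ^ d * (2 * (2 * η (24 * d) ^ 2) ^ d) * η (6 * d / (N ^ m : ℕ)) ^ (d - α) ≤ 1) :
    ENNReal.ofReal α ≤ dimH (f '' ⋂ n, ⋃₀ 𝓕 n) := by
  borelize Y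
  set F := ⋂ n, ⋃₀ 𝓕 n
  have hroot : cube (fun _ => 0) 1 ∈ 𝓕 0 := h.1.superset rfl
  obtain ⟨_, _, -, hroot_cell, -⟩ := h.exists_isFatCell hN hroot
  have hη_pos {t : ℝ} (ht : 1 ≤ t) : 0 < η t :=
    one_pos.trans_le (hf.one_le hη hroot_cell.nontrivial ht)
  have hd : (1 : ℝ) ≤ d := mod_cast NeZero.one_le
  have hK : (8 : ℝ) ≤ (N ^ m : ℕ) := mod_cast hN
  have hc : 0 < (4 * η (6 * d * (N ^ m : ℕ)) * η (24 * d))⁻¹ :=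
    inv_pos.2 (mul_pos (mul_pos four_pos (hη_pos (by nlinarith))) (hη_pos (by linarith)))
  have hmeasure : Measure.hausdorffMeasure α (f '' (F ∩ cube (fun _ => 0) 1)) ≠ 0 := by
    refine hausdorffMeasure_ne_zero_of_forall_isSplitting
      (𝓐 := {A | ∃ n, ∃ Q ∈ 𝓕 n, A = f '' (F ∩ Q)}) hα hc ?_ ?_ ?_ ⟨0, _, hroot, rfl⟩
    · rintro _ ⟨n, Q, hQ, rfl⟩
      exact (h.isCompact_iInter.inter (h.isCompact_of_mem hQ)).image_of_continuousOn
        ((hf.continuousOn hη₀).mono inter_subset_left)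
    · rintro _ ⟨n, Q, hQ, rfl⟩
      obtain ⟨c, a₀, rfl, hcell, -⟩ := h.exists_isFatCell hN hQ
      exact hf.diam_image_pos hη inter_subset_left hcell.diam_pos
    · rintro _ ⟨n, Q, hQ, rfl⟩
      obtain ⟨c, a₀, rfl, hcell, hchild⟩ := h.exists_isFatCell hN hQ
      obtain ⟨𝓑, h𝓑, hsplit⟩ := hcell.exists_isSplitting hf hη hαd hhalf hsmall
      refine ⟨𝓑, fun B hB => ?_, hsplit⟩
      obtain ⟨a, ha, rfl⟩ := h𝓑 B hB
      exact ⟨n + 1, _, hchild a ha, rfl⟩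
  rw [← Real.coe_toNNReal α hα.le] at hmeasure
  exact (le_dimH_of_hausdorffMeasure_ne_zero hmeasure).trans
    (dimH_mono (image_mono inter_subset_left))

theorem fatCantor_dimH_image_ge_general {d : ℕ} {η : ℝ → ℝ} (hη : MonotoneOn η (Ici 0))
    (hη₀ : Tendsto η (nhdsWithin 0 (Ioi 0)) (nhds 0)) {α : ℝ} (hα0 : 0 < α) (hαd : α < d) :
    ∃ K₀ : ℕ, ∀ N m, K₀ ≤ N ^ m → ∀ F : Set (EuclideanSpace ℝ (Fin d)), IsFatCantorSet d N m F →
      ∀ (Y : Type*) [MetricSpace Y] (f : EuclideanSpace ℝ (Fin d) → Y),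
        IsQSOn η f F → ENNReal.ofReal α ≤ dimH (f '' F) := by
  have hd : (0 : ℝ) < d := hα0.trans hαd
  have : NeZero d := ⟨(Nat.cast_pos.1 hd).ne'⟩
  obtain ⟨K₀, hK₀⟩ := eventually_atTop.1 <| (eventually_ge_atTop 8).and <|
    eventually_comp_div_natCast_small hη₀ (b := 6 * d) (by positivity) (sub_pos.2 hαd)
      (2 ^ d * (2 * (2 * η (24 * d) ^ 2) ^ d))
  refine ⟨K₀, ?_⟩
  rintro N m hNm _ ⟨𝓕, h, rfl⟩ Y _ f hf
  obtain ⟨hN, hhalf, hsmall⟩ := hK₀ (N ^ m) hNm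
  exact h.le_dimH_image hN hf hη hη₀ hα0 hαd.le hhalf hsmall

/-- For every distortion function `η` and `0 < α < d` there exists `m₀` such
that for every `m ≥ m₀`, every `(N,m)`-fat Cantor set `F ⊆ [0,1]^d` and every
`η`-quasisymmetry `f : F → Y`, one has `dimH (f '' F) ≥ α`. -/
theorem fatCantor_dimH_image_ge
    (d N : ℕ) (hd : 1 ≤ d) (hN : 2 ≤ N) (η : ℝ → ℝ) (hη : IsDistortion η)
    (α : ℝ) (hα0 : 0 < α) (hαd : α < d) :
    ∃ m₀ : ℕ, ∀ m, m₀ ≤ m → ∀ F : Set (EuclideanSpace ℝ (Fin d)), IsFatCantorSet d N m F →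
      ∀ (Y : Type) [MetricSpace Y] (f : EuclideanSpace ℝ (Fin d) → Y),
        IsQSOn η f F → ENNReal.ofReal α ≤ dimH (f '' F) := by
  obtain ⟨K₀, hK₀⟩ := fatCantor_dimH_image_ge_general hη.2.1.monotoneOn
    hη.tendsto_zero hα0 hαd
  exact ⟨K₀, fun m hm => hK₀ N m (hm.trans (m.lt_pow_self hN).le)⟩
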